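/- arXiv:2603.10719 — 2 statements merged into one kernel-verified Lean document; each statement's English description precedes it below -/
import Mathlib

section
/- If U ∈ GL(n,ℂ) is unipotent (all eigenvalues equal to 1), then for every v ∈ ℂⁿ the affine transformation g = (U,v) ∈ Aff(n,ℂ) is strongly c-reversible, and hence can be written as a product of two coninvolutions in Aff(n,ℂ). -/
open Matrix
noncomputable section

/-- `Aff n` models the affine group `Aff(n, ℂ) = GL(n, ℂ) ⋉ ℂⁿ`,
with elements `g = (A, v)` acting by `x ↦ A x + v`. -/
@[ext] structure Aff (n : ℕ) where
  A : GL (Fin n) ℂ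
  v : Fin n → ℂ

namespace Aff

variable {n : ℕ}

instance : Mul (Aff n) :=
  ⟨fun g h => ⟨g.A * h.A, (g.A : Matrix (Fin n) (Fin n) ℂ) *ᵥ h.v + g.v⟩⟩

instance : One (Aff n) := ⟨⟨1, 0⟩⟩

instance : Inv (Aff n) :=
  ⟨fun g => ⟨g.A⁻¹, -((g.A⁻¹ : Matrix (Fin n) (Fin n) ℂ) *ᵥ g.v)⟩⟩

@[simp] lemma mul_A (g h : Aff n) : (g * h).A = g.A * h.A := rfl
@[simp] lemma mul_v (g h : Aff n) :
    (g * h).v = (g.A : Matrix (Fin n) (Fin n) ℂ) *ᵥ h.v + g.v := rfl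
@[simp] lemma one_A : (1 : Aff n).A = 1 := rfl
@[simp] lemma one_v : (1 : Aff n).v = 0 := rfl
@[simp] lemma inv_A (g : Aff n) : (g⁻¹).A = g.A⁻¹ := rfl
@[simp] lemma inv_v (g : Aff n) :
    (g⁻¹).v = -((g.A⁻¹ : Matrix (Fin n) (Fin n) ℂ) *ᵥ g.v) := rfl

instance : Group (Aff n) where
  mul_assoc a b c := by
    ext : 1
    · simp [mul_assoc]
    · simp [Units.val_mul, mulVec_add, mulVec_mulVec, add_assoc]
  one_mul a := by
    ext : 1 <;> simp
  mul_one a := by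
    ext : 1 <;> simp
  inv_mul_cancel a := by
    ext : 1 <;> simp

/-- Entrywise complex conjugation on `GL(m, ℂ)`. -/
def glConj {m : Type*} [Fintype m] [DecidableEq m] : GL m ℂ →* GL m ℂ :=
  Units.map ((starRingEnd ℂ).mapMatrix.toMonoidHom)

/-- The conjugate `ḡ = (Ā, v̄)` of an affine transformation `g = (A, v)`. -/
def bar (g : Aff n) : Aff n :=
  ⟨glConj g.A, star g.v⟩

/-- `h ∈ Aff(n, ℂ)` is a coninvolution if `h h̄ = e`. -/
def IsConinvolution (g : Aff n) : Prop := g * bar g = 1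

/-- `g` is c-reversible if `h g h⁻¹ = ḡ⁻¹` for some `h ∈ Aff(n, ℂ)`. -/
def IsCReversible (g : Aff n) : Prop :=
  ∃ h : Aff n, h * g * h⁻¹ = (bar g)⁻¹

/-- `g` is strongly c-reversible if `h g h⁻¹ = ḡ⁻¹` for some coninvolution `h`. -/
def IsStronglyCReversible (g : Aff n) : Prop :=
  ∃ h : Aff n, IsConinvolution h ∧ h * g * h⁻¹ = (bar g)⁻¹

end Aff

namespace UniRev

open Polynomial

/-- Conjugation of coefficients on `ℂ[X]`. -/
def pc : ℂ[X] →+* ℂ[X] := Polynomial.mapRingHom (starRingEnd ℂ)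

lemma pc_pc (p : ℂ[X]) : pc (pc p) = p := by
  ext k; simp [pc]

lemma pc_X : pc X = X := by simp [pc]

lemma pc_C (c : ℂ) : pc (C c) = C (starRingEnd ℂ c) := by simp [pc]

lemma pc_eval (p : ℂ[X]) : (pc p).eval 0 = starRingEnd ℂ (p.eval 0) := by
  simp [pc, ← Polynomial.coeff_zero_eq_eval_zero]

/-- Conjugation on `ℂ[X]/(X^k)`. -/
def qc (k : ℕ) : (ℂ[X] ⧸ Ideal.span {(X : ℂ[X]) ^ k}) →+* (ℂ[X] ⧸ Ideal.span {(X : ℂ[X]) ^ k}) :=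
  Ideal.quotientMap _ pc (by
    rw [Ideal.span_le]
    intro x hx
    rw [Set.mem_singleton_iff] at hx
    subst hx
    simp only [SetLike.mem_coe, Ideal.mem_comap, map_pow, pc_X]
    exact Ideal.mem_span_singleton_self _)

lemma qc_mk (k : ℕ) (p : ℂ[X]) : qc k (Ideal.Quotient.mk _ p) = Ideal.Quotient.mk _ (pc p) := rfl

lemma qc_smul (k : ℕ) (p : ℂ[X]) (y) : qc k (p • y) = pc p • qc k y := by
  obtain ⟨q, rfl⟩ := Ideal.Quotient.mk_surjective y
  change qc k (Ideal.Quotient.mk _ (p * q)) = _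
  rw [qc_mk, qc_mk, map_mul]
  rfl

lemma qc_qc (k : ℕ) (y) : qc k (qc k y) = y := by
  obtain ⟨q, rfl⟩ := Ideal.Quotient.mk_surjective y
  rw [qc_mk, qc_mk, pc_pc]

lemma phase (γ : ℂ) : ∃ u : ℂ, u * starRingEnd ℂ u = 1 ∧ u * γ = starRingEnd ℂ γ := by
  by_cases h : γ = 0
  · exact ⟨1, by simp, by simp [h]⟩
  · have h' : starRingEnd ℂ γ ≠ 0 := by simpa using h
    refine ⟨starRingEnd ℂ γ / γ, ?_, ?_⟩
    · simp only [map_div₀, Complex.conj_conj]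
      field_simp
    · field_simp

lemma exists_tau_poly {V : Type*} [AddCommGroup V] [Module ℂ[X] V] {d : ℕ} (k : Fin d → ℕ)
    (φ : V ≃ₗ[ℂ[X]] ((i : Fin d) → ℂ[X] ⧸ Ideal.span {(X : ℂ[X]) ^ k i}))
    (f : V →+ ℂ) (hf : ∀ (p : ℂ[X]) x, f (p • x) = p.eval 0 * f x) :
    ∃ τ : V → V, (∀ x y, τ (x + y) = τ x + τ y) ∧ (∀ (p : ℂ[X]) x, τ (p • x) = pc p • τ x) ∧
      (∀ x, τ (τ x) = x) ∧ ∀ x, f (τ x) = starRingEnd ℂ (f x) := by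
  classical
  let e : Fin d → V := fun i => φ.symm (Pi.single i 1)
  choose u hu1 hu2 using fun i => phase (f (e i))
  let σ : ((i : Fin d) → ℂ[X] ⧸ Ideal.span {(X : ℂ[X]) ^ k i}) →
      ((i : Fin d) → ℂ[X] ⧸ Ideal.span {(X : ℂ[X]) ^ k i}) :=
    fun y i => (C (u i) : ℂ[X]) • qc (k i) (y i)
  have key : ∀ P : Fin d → ℂ[X], φ.symm (fun i => Ideal.Quotient.mk _ (P i)) = ∑ i, P i • e i := by
    intro P
    rw [LinearEquiv.symm_apply_eq, map_sum]
    simp only [map_smul, e, LinearEquiv.apply_symm_apply]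
    ext i
    rw [Finset.sum_apply, Finset.sum_eq_single i]
    · simp only [Pi.smul_apply, Pi.single_eq_same]
      change _ = Ideal.Quotient.mk _ (P i * 1)
      rw [mul_one]
    · intro j _ hj
      rw [Pi.smul_apply, Pi.single_eq_of_ne hj.symm, smul_zero]
    · simp
  refine ⟨fun x => φ.symm (σ (φ x)), ?_, ?_, ?_, ?_⟩
  · intro x y
    beta_reduce
    rw [← map_add φ.symm]
    refine congrArg φ.symm ?_
    ext i
    simp only [σ, map_add, Pi.add_apply, smul_add]
  · intro p x
    beta_reduce
    rw [← map_smul φ.symm]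
    refine congrArg φ.symm ?_
    ext i
    simp only [σ, map_smul, Pi.smul_apply, qc_smul]
    rw [smul_comm]
  · intro x
    simp only [LinearEquiv.apply_symm_apply]
    rw [LinearEquiv.symm_apply_eq]
    ext i
    simp only [σ, qc_smul, qc_qc, pc_C, smul_smul, ← C_mul, hu1, C_1, one_smul]
  · intro x
    choose P hP using fun i => Ideal.Quotient.mk_surjective (φ x i)
    have h1 : x = ∑ i, P i • e i := by
      rw [← key, LinearEquiv.eq_symm_apply]
      ext i
      exact (hP i).symm
    have h2 : φ.symm (σ (φ x)) = ∑ i, (C (u i) * pc (P i)) • e i := by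
      rw [← key]
      congr 1
      ext i
      simp only [σ, ← hP, qc_mk]
      rfl
    beta_reduce
    rw [h2, h1]
    simp only [map_sum, hf, map_mul, eval_mul, eval_C, pc_eval, ← hu2]
    refine Finset.sum_congr rfl fun i _ => ?_
    ring

lemma exists_tau {W : Type*} [AddCommGroup W] [Module ℂ W] [FiniteDimensional ℂ W]
    (S : Module.End ℂ W) (hS : IsNilpotent S) (f : W →ₗ[ℂ] ℂ) (hf : ∀ w, f (S w) = 0) :
    ∃ τ : W → W, (∀ x y, τ (x + y) = τ x + τ y) ∧
      (∀ (c : ℂ) x, τ (c • x) = starRingEnd ℂ c • τ x) ∧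
      (∀ x, τ (τ x) = x) ∧ (∀ x, τ (S x) = S (τ x)) ∧ ∀ x, f (τ x) = starRingEnd ℂ (f x) := by
  obtain ⟨m, hm⟩ := hS
  have htor : Module.IsTorsion' (Module.AEval' S) (Submonoid.powers (X : ℂ[X])) := by
    intro x
    refine ⟨⟨X ^ m, m, rfl⟩, ?_⟩
    obtain ⟨w, rfl⟩ := (Module.AEval'.of S).surjective x
    change (X ^ m : ℂ[X]) • (Module.AEval'.of S w) = 0
    rw [Module.AEval'.X_pow_smul_of, hm, zero_smul, map_zero]
  obtain ⟨d, k, ⟨φ⟩⟩ := Module.torsion_by_prime_power_decomposition (p := (X : ℂ[X]))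
    Polynomial.irreducible_X htor
  let o := Module.AEval'.of S
  have hfe : ∀ (p : ℂ[X]) (w : W), f (aeval S p w) = p.eval 0 * f w := by
    intro p w
    induction p using Polynomial.induction_on' with
    | add p q hp hq => simp [hp, hq, add_mul]
    | monomial j a =>
      cases j with
      | zero => simp [aeval_monomial]
      | succ j => simp [aeval_monomial, pow_succ', hf]
  obtain ⟨τ, h1, h2, h3, h4⟩ := exists_tau_poly k
    (φ.trans (DirectSum.linearEquivFunOnFintype ℂ[X] (Fin d) _))
    (f.toAddMonoidHom.comp o.symm.toLinearMap.toAddMonoidHom) (by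
      intro p x
      obtain ⟨w, rfl⟩ := o.surjective x
      change f (o.symm (p • o w)) = _ * f (o.symm (o w))
      rw [Module.AEval.of_symm_smul, LinearEquiv.symm_apply_apply]
      exact hfe p w)
  refine ⟨fun w => o.symm (τ (o w)), ?_, ?_, ?_, ?_, ?_⟩
  · intro x y
    beta_reduce
    rw [map_add, h1, map_add]
  · intro c x
    beta_reduce
    rw [map_smul, ← Module.AEval.C_smul, h2, pc_C, Module.AEval.C_smul, map_smul]
  · intro x
    simp [h3]
  · intro x
    simp only [o]
    rw [← Module.AEval'.X_smul_of, h2, pc_X, Module.AEval'.of_symm_X_smul]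
  · intro x
    have := h4 (o x)
    change f (o.symm (τ (o x))) = starRingEnd ℂ (f (o.symm (o x))) at this
    rwa [LinearEquiv.symm_apply_apply] at this

/-- Reversing real structure for a unipotent operator. -/
lemma exists_tau_unip {W : Type*} [AddCommGroup W] [Module ℂ W] [FiniteDimensional ℂ W]
    (T : Module.End ℂ W) (hT : IsNilpotent (T - 1)) (f : W →ₗ[ℂ] ℂ) (hf : ∀ w, f (T w) = f w) :
    ∃ τ : W → W, (∀ x y, τ (x + y) = τ x + τ y) ∧
      (∀ (c : ℂ) x, τ (c • x) = starRingEnd ℂ c • τ x) ∧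
      (∀ x, τ (τ x) = x) ∧ (∀ x, T (τ (T x)) = τ x) ∧ ∀ x, f (τ x) = starRingEnd ℂ (f x) := by
  have hu : IsUnit (T + 1) := by
    have h2 : IsUnit (algebraMap ℂ (Module.End ℂ W) 2) :=
      (IsUnit.mk0 (2 : ℂ) two_ne_zero).map _
    have := hT.isUnit_add_left_of_commute h2 (Algebra.commutes _ _).symm
    have h3 : algebraMap ℂ (Module.End ℂ W) 2 + (T - 1) = T + 1 := by
      rw [map_ofNat, ← one_add_one_eq_two]
      abel
    rwa [h3] at this
  obtain ⟨E, hE⟩ := hu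
  have hcomm : Commute (T - 1) (↑E⁻¹ : Module.End ℂ W) := by
    apply Commute.units_inv_right
    rw [hE]
    exact ((Commute.refl T).add_right (Commute.one_right T)).sub_left (Commute.one_left _)
  set K : Module.End ℂ W := (T - 1) * ↑E⁻¹ with hK
  have hKn : IsNilpotent K := hcomm.isNilpotent_mul_right hT
  have hKT : T * (1 - K) = 1 + K := by
    have : K * (T + 1) = T - 1 := by rw [hK, ← hE, mul_assoc, Units.inv_mul, mul_one]
    have h' : (T + 1) * K = T - 1 := by
      rw [hK, hcomm.eq, ← hE, ← mul_assoc, Units.mul_inv, one_mul]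
    rw [mul_sub, mul_one]
    rw [add_mul, one_mul] at h'
    have : T * K = T - 1 - K := by rw [← h']; abel
    rw [this]; abel
  obtain ⟨τ, h1, h2, h3, h4, h5⟩ := exists_tau (Complex.I • K) (hKn.smul _) f (by
    intro w
    simp [hK, hf])
  have h4' : ∀ x, τ (K x) = - K (τ x) := by
    intro x
    have := h4 x
    rw [LinearMap.smul_apply, LinearMap.smul_apply, h2, Complex.conj_I, neg_smul, ← smul_neg] at this
    have := smul_right_injective W Complex.I_ne_zero this
    rw [← this, neg_neg]
  have hneg : ∀ x, τ (-x) = - τ x := by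
    intro x
    have := h2 (-1) x
    simpa using this
  refine ⟨τ, h1, h2, h3, ?_, h5⟩
  intro x
  obtain ⟨F, hF⟩ := hKn.isUnit_one_sub
  obtain ⟨y, rfl⟩ : ∃ y, (1 - K) y = x := by
    refine ⟨(↑F⁻¹ : Module.End ℂ W) x, ?_⟩
    rw [← hF, ← Module.End.mul_apply, Units.mul_inv, Module.End.one_apply]
  have hKT' : ∀ z, T ((1 - K) z) = z + K z := by
    intro z
    rw [← Module.End.mul_apply, hKT]; simp
  rw [hKT', h1, h4']
  have := hKT' (τ y)
  rw [LinearMap.sub_apply, Module.End.one_apply] at this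
  rw [← sub_eq_add_neg, this, LinearMap.sub_apply, Module.End.one_apply, sub_eq_add_neg y, h1,
    hneg, h4', neg_neg]

lemma unip_nilpotent {n : ℕ} (A : Matrix (Fin n) (Fin n) ℂ) (h : ∀ μ ∈ spectrum ℂ A, μ = 1) :
    IsNilpotent (A - 1) := by
  have hs := (IsAlgClosed.splits A.charpoly).eq_prod_roots_of_monic A.charpoly_monic
  have hr : A.charpoly.roots = Multiset.replicate (Multiset.card A.charpoly.roots) 1 := by
    rw [Multiset.eq_replicate]
    refine ⟨rfl, fun b hb => h b ?_⟩
    rw [Matrix.mem_spectrum_iff_isRoot_charpoly]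
    exact (Polynomial.mem_roots'.1 hb).2
  have hc := A.aeval_self_charpoly
  rw [hs, hr] at hc
  refine ⟨Multiset.card A.charpoly.roots, ?_⟩
  simpa only [Multiset.map_replicate, Multiset.prod_replicate, map_pow, map_sub, aeval_X, C_1,
    map_one] using hc

/-- The affine action. -/
def act {n : ℕ} (g : Aff n) (x : Fin n → ℂ) : Fin n → ℂ :=
  (g.A : Matrix (Fin n) (Fin n) ℂ) *ᵥ x + g.v

lemma act_mul {n : ℕ} (g h : Aff n) (x) : act (g * h) x = act g (act h x) := by
  simp [act, mulVec_add, mulVec_mulVec, add_assoc]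

lemma act_one {n : ℕ} (x : Fin n → ℂ) : act 1 x = x := by
  simp [act]

lemma act_inj {n : ℕ} {g h : Aff n} (H : ∀ x, act g x = act h x) : g = h := by
  have hv : g.v = h.v := by simpa [act] using H 0
  ext : 1
  · apply Units.ext
    apply Matrix.toLin'.injective
    ext1 i
    ext1
    have := H (Pi.single i 1)
    simp only [act, hv] at this
    simpa using this
  · exact hv

lemma glConj_val {n : ℕ} (A : GL (Fin n) ℂ) :
    ((Aff.glConj A : GL (Fin n) ℂ) : Matrix (Fin n) (Fin n) ℂ) =
      (A : Matrix (Fin n) (Fin n) ℂ).map (starRingEnd ℂ) := rfl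

lemma map_mulVec {n : ℕ} (A : Matrix (Fin n) (Fin n) ℂ) (x : Fin n → ℂ) :
    A.map (starRingEnd ℂ) *ᵥ x = star (A *ᵥ star x) := by
  ext i
  simp [Matrix.mulVec, dotProduct]

lemma act_bar {n : ℕ} (g : Aff n) (x) : act (Aff.bar g) x = star (act g (star x)) := by
  simp only [act, Aff.bar, glConj_val, map_mulVec, star_add]

lemma bar_mul {n : ℕ} (g h : Aff n) : Aff.bar (g * h) = Aff.bar g * Aff.bar h := by
  apply act_inj
  intro x
  simp [act_bar, act_mul]

lemma bar_bar {n : ℕ} (g : Aff n) : Aff.bar (Aff.bar g) = g := by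
  apply act_inj
  intro x
  simp [act_bar]

lemma bar_one {n : ℕ} : Aff.bar (1 : Aff n) = 1 := by
  apply act_inj
  intro x
  simp [act_bar, act_one]

lemma bar_inv {n : ℕ} (g : Aff n) : Aff.bar g⁻¹ = (Aff.bar g)⁻¹ := by
  rw [eq_inv_iff_mul_eq_one, ← bar_mul, inv_mul_cancel, bar_one]

/-- The linear extension of an affine map. -/
def ext1 {n : ℕ} (A : Matrix (Fin n) (Fin n) ℂ) (v : Fin n → ℂ) :
    Module.End ℂ ((Fin n → ℂ) × ℂ) where
  toFun p := (A *ᵥ p.1 + p.2 • v, p.2)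
  map_add' p q := by
    ext1
    · simp only [Prod.fst_add, Prod.snd_add, mulVec_add, add_smul]; abel
    · rfl
  map_smul' c p := by
    ext1
    · simp [mulVec_smul, mul_smul]
    · rfl

lemma ext1_nilpotent {n : ℕ} (A : Matrix (Fin n) (Fin n) ℂ) (v : Fin n → ℂ)
    (h : IsNilpotent (A - 1)) : IsNilpotent (ext1 A v - 1) := by
  obtain ⟨m, hm⟩ := h
  have key : ∀ (k : ℕ) (x : Fin n → ℂ), ((ext1 A v - 1) ^ k) (x, 0) = (((A - 1) ^ k) *ᵥ x, 0) := by
    intro k x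
    induction k with
    | zero => simp
    | succ k ih =>
      rw [pow_succ', Module.End.mul_apply, ih, pow_succ', ← mulVec_mulVec]
      ext1 <;> simp [ext1, sub_mul, sub_mulVec]
  refine ⟨m + 1, ?_⟩
  apply LinearMap.ext
  rintro ⟨x, t⟩
  rw [pow_succ, Module.End.mul_apply]
  have : (ext1 A v - 1) (x, t) = (A *ᵥ x + t • v - x, 0) := by
    ext1 <;> simp [ext1]
  rw [this, key, hm]
  simp

lemma strong {n : ℕ} (U : GL (Fin n) ℂ)
    (hU : ∀ μ ∈ spectrum ℂ (U : Matrix (Fin n) (Fin n) ℂ), μ = 1) (v : Fin n → ℂ) :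
    Aff.IsStronglyCReversible ⟨U, v⟩ := by
  obtain ⟨τ, h1, h2, h3, h4, h5⟩ := exists_tau_unip (ext1 (U : Matrix (Fin n) (Fin n) ℂ) v)
    (ext1_nilpotent _ _ (unip_nilpotent _ hU)) (LinearMap.snd ℂ _ _) (fun _ => rfl)
  simp only [LinearMap.snd_apply] at h5
  let L : (Fin n → ℂ) →ₗ[ℂ] (Fin n → ℂ) :=
    { toFun := fun x => star (τ (x, 0)).1
      map_add' := by
        intro x y
        have : ((x + y, 0) : (Fin n → ℂ) × ℂ) = (x, 0) + (y, 0) := by simp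
        rw [this, h1]; simp
      map_smul' := by
        intro c x
        have : ((c • x, 0) : (Fin n → ℂ) × ℂ) = c • (x, 0) := by simp
        rw [this, h2]; ext i; simp }
  have hL : ∀ x, τ (x, 0) = (star (L x), 0) := by
    intro x
    ext1
    · simp [L]
    · simp [h5]
  let B : Matrix (Fin n) (Fin n) ℂ := LinearMap.toMatrix' L
  have hB : ∀ x, B *ᵥ x = L x := fun x => LinearMap.toMatrix'_mulVec L x
  have hLL : ∀ x, L (star (L x)) = star x := by
    intro x
    have := h3 (x, 0)
    rw [hL, hL] at this
    have := congrArg Prod.fst this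
    simp only at this
    exact (star_eq_iff_star_eq.1 this).symm
  have e1 : B * B.map (starRingEnd ℂ) = 1 := by
    apply Matrix.toLin'.injective
    apply LinearMap.ext
    intro x
    simp only [Matrix.toLin'_apply, ← mulVec_mulVec, map_mulVec, hB, hLL, one_mulVec, star_star]
  have e2 : B.map (starRingEnd ℂ) * B = 1 := mul_eq_one_comm.1 e1
  let h : Aff n := ⟨⟨B, B.map (starRingEnd ℂ), e1, e2⟩, star (τ (0, 1)).1⟩
  have hh : ∀ x, τ (x, 1) = (star (act h x), 1) := by
    intro x
    have : ((x, 1) : (Fin n → ℂ) × ℂ) = (x, 0) + (0, 1) := by simp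
    rw [this, h1, hL]
    ext1
    · simp [act, h, hB]
    · simp [h5]
  have hhh : ∀ x, act h (star (act h x)) = star x := by
    intro x
    have := h3 (x, 1)
    rw [hh, hh] at this
    have := congrArg Prod.fst this
    simp only at this
    exact (star_eq_iff_star_eq.1 this).symm
  have hT : ∀ x, ext1 (U : Matrix (Fin n) (Fin n) ℂ) v (x, 1) = (act ⟨U, v⟩ x, 1) := by
    intro x
    simp [ext1, act]
  refine ⟨h, ?_, ?_⟩
  · apply act_inj
    intro x
    rw [act_mul, act_bar, hhh, act_one, star_star]
  · rw [mul_inv_eq_iff_eq_mul, eq_inv_mul_iff_mul_eq]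
    apply act_inj
    intro x
    rw [act_mul, act_bar, act_mul]
    have := h4 (x, 1)
    rw [hT, hh, hT, hh] at this
    have := congrArg Prod.fst this
    simp only at this
    rw [this, star_star]

end UniRev

/-- if `U ∈ GL(n, ℂ)` is unipotent (all eigenvalues equal to `1`),
then for every `v ∈ ℂⁿ` the affine transformation `g = (U, v)` is strongly
c-reversible, hence a product of two coninvolutions in `Aff(n, ℂ)`. -/
theorem unipotent_stronglyCReversible {n : ℕ} (U : GL (Fin n) ℂ)
    (hU : ∀ μ ∈ spectrum ℂ (U : Matrix (Fin n) (Fin n) ℂ), μ = 1)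
    (v : Fin n → ℂ) :
    Aff.IsStronglyCReversible ⟨U, v⟩ ∧
      ∃ a b : Aff n, Aff.IsConinvolution a ∧ Aff.IsConinvolution b ∧
        (⟨U, v⟩ : Aff n) = a * b := by
  have hs := UniRev.strong U hU v
  refine ⟨hs, ?_⟩
  obtain ⟨h, hc, hr⟩ := hs
  unfold Aff.IsConinvolution at hc
  have hb : Aff.bar h = h⁻¹ := eq_inv_of_mul_eq_one_right hc
  refine ⟨h⁻¹, h * ⟨U, v⟩, ?_, ?_, ?_⟩
  · unfold Aff.IsConinvolution
    rw [UniRev.bar_inv, hb, inv_inv, inv_mul_cancel]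
  · unfold Aff.IsConinvolution
    rw [UniRev.bar_mul, hb, ← mul_assoc, hr, inv_mul_cancel]
  · rw [inv_mul_cancel_left]
end
end

section
/- For g ∈ Aff(n,ℂ) the following are equivalent: (i) g is c-reversible in Aff(n,ℂ); (ii) g is a product of two coninvolutions in Aff(n,ℂ); (iii) the linear part L(g) is c-reversible in GL(n,ℂ), i.e., L(g) is similar to (L(g)‾)⁻¹. -/
open Matrix
noncomputable section

section Helpers
open Polynomial

lemma comp (I : Ideal ℂ[X]) (a : ℂ) (ha : ‖a‖ = 1) (k : ℕ) (hI : I = Ideal.span {(X - C a)^k})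
    (m : (ℂ[X] ⧸ I) →ₗ[ℂ] ℂ) (hm : ∀ y, m ((X : ℂ[X]) • y) = m y) :
    ∃ φ : (ℂ[X] ⧸ I) →ₛₗ[starRingEnd ℂ] (ℂ[X] ⧸ I), (∀ y, φ (φ y) = y) ∧
      (∀ y, (X : ℂ[X]) • φ ((X : ℂ[X]) • y) = φ y) ∧ ∀ y, m (φ y) = starRingEnd ℂ (m y) := by
  have ha0 : a ≠ 0 := by rintro rfl; simp at ha
  have hac : a * starRingEnd ℂ a = 1 := by
    rw [Complex.mul_conj, Complex.normSq_eq_norm_sq, ha]; simp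
  set π := Ideal.Quotient.mk I with hπ
  have hsm : ∀ (p : ℂ[X]) (y : ℂ[X] ⧸ I), p • y = π p * y := by
    intro p y; rfl
  have hcsm : ∀ (p : ℂ) (y : ℂ[X] ⧸ I), p • y = π (C p) * y := by
    intro p y
    rw [← hsm, ← algebraMap_smul ℂ[X] p y]; rfl
  have hcop : IsCoprime (X : ℂ[X]) ((X - C a)^k) := by
    apply IsCoprime.pow_right
    refine ⟨C a⁻¹, -C a⁻¹, ?_⟩
    have : (C a⁻¹ * C a : ℂ[X]) = 1 := by rw [← C_mul, inv_mul_cancel₀ ha0, C_1]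
    linear_combination this
  obtain ⟨s, t, hst⟩ := hcop
  have hker : π ((X - C a)^k) = 0 := by
    rw [hπ, Ideal.Quotient.eq_zero_iff_mem, hI]; exact Ideal.subset_span rfl
  set u := π X with hu
  set w := π s with hw
  have hwu : w * u = 1 := by
    rw [hw, hu, ← map_mul, ← map_one π, ← hst, map_add, map_mul π t, hker, mul_zero, add_zero]
  let ev : ℂ[X] →+* (ℂ[X] ⧸ I) := eval₂RingHom ((π.comp C).comp (starRingEnd ℂ)) w
  have hevX : ev X = w := by simp [ev]
  have hevC : ∀ c, ev (C c) = π (C (starRingEnd ℂ c)) := by intro c; simp [ev]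
  have hev : ∀ p ∈ I, ev p = 0 := by
    have h1 : ev ((X - C a)^k) = 0 := by
      rw [map_pow, map_sub, hevX, hevC]
      have h3 : π (C a) * π (C (starRingEnd ℂ a)) = 1 := by
        rw [← map_mul, ← C_mul, hac]; simp
      have : w - π (C (starRingEnd ℂ a)) = (- w * π (C (starRingEnd ℂ a))) * π (X - C a) := by
        rw [map_sub, ← hu]
        linear_combination (- w) * h3 + π (C (starRingEnd ℂ a)) * hwu
      rw [this, mul_pow, ← map_pow π, hker, mul_zero]
    intro p hp
    rw [hI, Ideal.mem_span_singleton] at hp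
    obtain ⟨r, rfl⟩ := hp
    rw [map_mul, h1, zero_mul]
  let φ : (ℂ[X] ⧸ I) →+* (ℂ[X] ⧸ I) := Ideal.Quotient.lift I ev hev
  have hφ : ∀ p, φ (π p) = ev p := fun p => Ideal.Quotient.lift_mk I ev hev
  have hφu : φ u = w := by rw [hu, hφ, hevX]
  have hφw : φ w = u := by
    have : φ w * φ u = 1 := by rw [← map_mul, hwu, map_one]
    rw [hφu] at this
    linear_combination u * this - φ w * hwu
  have hφC : ∀ c, φ (π (C c)) = π (C (starRingEnd ℂ c)) := fun c => by rw [hφ, hevC]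
  have hφφ : ∀ y, φ (φ y) = y := by
    have : ((φ.comp φ).comp π) = π := by
      apply Polynomial.ringHom_ext
      · intro c; simp [hφC]
      · simp only [RingHom.comp_apply]; rw [← hu, hφu, hφw]
    intro y
    obtain ⟨p, rfl⟩ := Ideal.Quotient.mk_surjective y
    exact congrArg (fun f => f p) this
  have hmw : ∀ n : ℕ, ∀ y, m (w ^ n * y) = m y := by
    intro n
    induction n with
    | zero => simp
    | succ n ih =>
      intro y
      rw [pow_succ, mul_assoc, ih, ← hm, hsm, ← hu, ← mul_assoc, mul_comm u, hwu, one_mul]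
  have hmu : ∀ n : ℕ, ∀ y, m (u ^ n * y) = m y := by
    intro n
    induction n with
    | zero => simp
    | succ n ih =>
      intro y
      rw [pow_succ, mul_assoc, ih, ← hm y, hsm]
  have hmφ : ∀ y, m (φ y) * starRingEnd ℂ (m 1) = starRingEnd ℂ (m y) * m 1 := by
    intro y
    obtain ⟨p, rfl⟩ := Ideal.Quotient.mk_surjective y
    induction p using Polynomial.induction_on' with
    | add p q hp hq => simp only [map_add, add_mul, hp, hq]
    | monomial n c =>
      rw [← C_mul_X_pow_eq_monomial, map_mul, map_mul, hφC, map_pow, map_pow, ← hu, hφu,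
        ← hcsm, ← hcsm, map_smul, map_smul, ← mul_one (w^n), ← mul_one (u^n), hmw, hmu]
      simp only [smul_eq_mul, map_mul]; ring
  obtain ⟨c, hc1, hc2⟩ : ∃ c : ℂ, c * starRingEnd ℂ c = 1 ∧ c * m 1 = starRingEnd ℂ (m 1) := by
    by_cases h : m 1 = 0
    · exact ⟨1, by simp, by simp [h]⟩
    · have h' : starRingEnd ℂ (m 1) ≠ 0 := by simpa using h
      refine ⟨starRingEnd ℂ (m 1) / m 1, ?_, ?_⟩
      · rw [map_div₀, Complex.conj_conj]; field_simp
      · field_simp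
  have hsl : ∀ (r : ℂ) y, φ (r • y) = (starRingEnd ℂ r) • φ y := by
    intro r y; rw [hcsm, map_mul, hφC, ← hcsm]
  refine ⟨{ toFun := fun y => c • φ y, map_add' := fun x y => by rw [map_add, smul_add],
            map_smul' := fun r y => by rw [hsl, smul_comm] }, ?_, ?_, ?_⟩
  · intro y
    change c • φ (c • φ y) = y
    rw [hsl, hφφ, smul_smul, hc1, one_smul]
  · intro y
    change (X : ℂ[X]) • (c • φ ((X : ℂ[X]) • y)) = c • φ y
    rw [hsm, hsm, ← hu, map_mul, hφu, mul_smul_comm, ← mul_assoc, mul_comm u, hwu, one_mul]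
  · intro y
    change m (c • φ y) = _
    rw [map_smul, smul_eq_mul]
    by_cases h : m 1 = 0
    · have hz : ∀ y, m y = 0 := by
        intro y
        obtain ⟨p, rfl⟩ := Ideal.Quotient.mk_surjective y
        induction p using Polynomial.induction_on' with
        | add p q hp hq => simp only [map_add, hp, hq, add_zero]
        | monomial n c =>
          rw [← C_mul_X_pow_eq_monomial, map_mul, map_pow, ← hu, ← hcsm, map_smul,
            ← mul_one (u^n), hmu, h, smul_zero]
      simp [hz]
    · apply mul_right_cancel₀ h
      rw [← hmφ, ← hc2]; ring

lemma irr_lin (p : ℂ[X]) (hp : Irreducible p) : ∃ a : ℂ, Associated p (X - C a) := by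
  obtain ⟨a, ha⟩ := IsAlgClosed.exists_root p (by rw [IsAlgClosed.degree_eq_one_of_irreducible ℂ hp]; simp)
  exact ⟨a, ((irreducible_X_sub_C a).associated_of_dvd hp (dvd_iff_isRoot.2 ha)).symm⟩

lemma circ {W : Type*} [AddCommGroup W] [Module ℂ W] [FiniteDimensional ℂ W]
    (G : Module.End ℂ W) (hG : ∀ a : ℂ, ∀ w, w ≠ 0 → G w = a • w → ‖a‖ = 1)
    (l : W →ₗ[ℂ] ℂ) (hl : ∀ w, l (G w) = l w) :
    ∃ σ : W →ₛₗ[starRingEnd ℂ] W, (∀ w, σ (σ w) = w) ∧ (∀ w, G (σ (G w)) = σ w) ∧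
      ∀ w, l (σ w) = starRingEnd ℂ (l w) := by
  classical
  obtain ⟨ι, _, p, hp, k, ⟨e⟩⟩ := Module.equiv_directSum_of_isTorsion
    (R := ℂ[X]) (M := Module.AEval' G) (Module.AEval.isTorsion_of_finiteDimensional ℂ W G)
  let e2 := e.trans (DirectSum.linearEquivFunOnFintype ℂ[X] ι _)
  let Φ : W ≃ₗ[ℂ] (∀ i, ℂ[X] ⧸ (Submodule.span ℂ[X] {p i ^ k i})) :=
    (Module.AEval'.of G).trans (e2.restrictScalars ℂ)
  have hΦ : ∀ w, Φ (G w) = (X : ℂ[X]) • Φ w := by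
    intro w
    change e2 (Module.AEval'.of G (G w)) = (X : ℂ[X]) • e2 (Module.AEval'.of G w)
    rw [← Module.AEval'.X_smul_of, map_smul]
  have hΦs : ∀ y, G (Φ.symm y) = Φ.symm ((X : ℂ[X]) • y) := by
    intro y
    apply Φ.injective
    rw [hΦ, Φ.apply_symm_apply, Φ.apply_symm_apply]
  have key : ∀ i, ∃ φ : (ℂ[X] ⧸ (Submodule.span ℂ[X] {p i ^ k i})) →ₛₗ[starRingEnd ℂ]
      (ℂ[X] ⧸ (Submodule.span ℂ[X] {p i ^ k i})), (∀ y, φ (φ y) = y) ∧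
      (∀ y, (X : ℂ[X]) • φ ((X : ℂ[X]) • y) = φ y) ∧
      ∀ y, l (Φ.symm (Pi.single i (φ y))) = starRingEnd ℂ (l (Φ.symm (Pi.single i y))) := by
    intro i
    have hI : ∃ a : ℂ, ‖a‖ = 1 ∧ (Ideal.span {p i ^ k i} : Ideal ℂ[X]) = Ideal.span {(X - C a) ^ (k i)} := by
      by_cases hk : k i = 0
      · exact ⟨1, by simp, by simp [hk]⟩
      obtain ⟨a, ha⟩ := irr_lin (p i) (hp i)
      have hspan : (Ideal.span {p i ^ k i} : Ideal ℂ[X]) = Ideal.span {(X - C a) ^ (k i)} :=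
        Ideal.span_singleton_eq_span_singleton.2 (ha.pow_pow)
      refine ⟨a, ?_, hspan⟩
      let y : ℂ[X] ⧸ (Submodule.span ℂ[X] {p i ^ k i}) :=
        Submodule.Quotient.mk ((X - C a) ^ (k i - 1))
      have hy : y ≠ 0 := by
        intro h
        have h2 := (Submodule.Quotient.mk_eq_zero _).1 h
        change _ ∈ Ideal.span _ at h2
        rw [hspan, Ideal.mem_span_singleton] at h2
        rw [pow_dvd_pow_iff (X_sub_C_ne_zero a) (not_isUnit_X_sub_C a)] at h2
        omega
      have hXy : (X : ℂ[X]) • y = a • y := by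
        have : (X - C a : ℂ[X]) • y = 0 := by
          rw [← Submodule.Quotient.mk_smul, Submodule.Quotient.mk_eq_zero]
          change _ ∈ Ideal.span _
          rw [hspan, smul_eq_mul, ← pow_succ', Nat.sub_add_cancel (Nat.pos_of_ne_zero hk)]
          exact Ideal.subset_span rfl
        rw [sub_smul, sub_eq_zero] at this
        rw [this, ← algebraMap_smul ℂ[X] a y]; rfl
      apply hG a (Φ.symm (Pi.single i y))
      · simpa using hy
      · rw [hΦs, ← Pi.single_smul, hXy, ← map_smul]
        congr 1
        exact (LinearMap.single ℂ (fun i => ℂ[X] ⧸ (Submodule.span ℂ[X] {p i ^ k i})) i).map_smul a y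
    obtain ⟨a, ha, hI⟩ := hI
    have := comp (Ideal.span {p i ^ k i}) a ha (k i) hI
      (l ∘ₗ Φ.symm.toLinearMap ∘ₗ 
        LinearMap.single ℂ (fun i => ℂ[X] ⧸ (Submodule.span ℂ[X] {p i ^ k i})) i) (by
        intro y
        change l (Φ.symm (Pi.single i ((X : ℂ[X]) • y))) = l (Φ.symm (Pi.single i y))
        have h := hl (Φ.symm (Pi.single i y))
        rw [hΦs, ← Pi.single_smul] at h
        exact h)
    exact this
  choose φ h1 h2 h3 using key
  refine ⟨{ toFun := fun w => Φ.symm (fun i => φ i (Φ w i)), map_add' := ?_, map_smul' := ?_ }, ?_, ?_, ?_⟩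
  · intro x y
    rw [← map_add]; congr 1; ext i; simp
  · intro r y
    rw [← map_smul]; congr 1; ext i; simp
  · intro w
    simp [h1]
  · intro w
    simp only [LinearMap.coe_mk, AddHom.coe_mk]
    rw [hΦs, hΦ]; congr 1; ext i
    simp only [Pi.smul_apply, h2]
  · intro w
    simp only [LinearMap.coe_mk, AddHom.coe_mk]
    have hs : ∀ f : (∀ i, ℂ[X] ⧸ (Submodule.span ℂ[X] {p i ^ k i})),
        l (Φ.symm f) = ∑ i, l (Φ.symm (Pi.single i (f i))) := by
      intro f
      conv_lhs => rw [← Finset.univ_sum_single f]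
      rw [map_sum, map_sum]
    conv_rhs => rw [← Φ.symm_apply_apply w]
    rw [hs, hs, map_sum]
    exact Finset.sum_congr rfl fun i _ => h3 i _

lemma gen_map {W : Type*} [AddCommGroup W] [Module ℂ W]
    (G : Module.End ℂ W)
    (l : W →ₗ[ℂ] ℂ) (hl : ∀ w, l (G w) = l w)
    (T : W →ₛₗ[starRingEnd ℂ] W) (hT : ∀ w, l w = 0 → G (T (G w)) = T w)
    (a b : ℂ) (ha : a ≠ 1) (hab : a ≠ 0 → starRingEnd ℂ a * b = 1) (w : W)
    (hw : w ∈ G.maxGenEigenspace a) : l w = 0 ∧ T w ∈ G.maxGenEigenspace b := by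
  rw [Module.End.mem_maxGenEigenspace] at hw
  obtain ⟨k, hk⟩ := hw
  have hl2 : ∀ k w, l (((G - a • 1) ^ k) w) = (1 - a) ^ k * l w := by
    intro k
    induction k with
    | zero => simp
    | succ k ih =>
      intro w
      rw [pow_succ, Module.End.mul_apply, ih]
      simp only [LinearMap.sub_apply, LinearMap.smul_apply, Module.End.one_apply, map_sub, hl,
        map_smul, smul_eq_mul]
      ring
  have hlw : l w = 0 := by
    have := hl2 k w
    rw [hk, map_zero] at this
    rcases mul_eq_zero.1 this.symm with h | h
    · exact absurd (sub_eq_zero.1 (eq_zero_of_pow_eq_zero h)).symm ha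
    · exact h
  refine ⟨hlw, ?_⟩
  have hT2 : ∀ k w, l w = 0 → (G ^ k) (T (((G - a • 1) ^ k) w))
      = ((1 - starRingEnd ℂ a • G) ^ k) (T w) := by
    intro k
    induction k with
    | zero => simp
    | succ k ih =>
      intro w hw
      have hc : Commute G ((1 - starRingEnd ℂ a • G) ^ k) := by
        apply Commute.pow_right
        exact (Commute.one_right _).sub_right ((Commute.refl G).smul_right _)
      have h0 : l ((G - a • 1) w) = 0 := by simpa [hw] using hl2 1 w
      rw [pow_succ (G - a • 1), pow_succ' G, Module.End.mul_apply, Module.End.mul_apply,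
        ih _ h0, ← Module.End.mul_apply, hc.eq, pow_succ, Module.End.mul_apply,
        Module.End.mul_apply]
      congr 1
      simp [hT w hw]
  have h3 := hT2 k w hlw
  rw [hk, map_zero, map_zero] at h3
  rw [Module.End.mem_maxGenEigenspace]
  by_cases h0 : a = 0
  · subst h0
    refine ⟨0, ?_⟩
    simpa using h3.symm
  · refine ⟨k, ?_⟩
    have : G - b • (1 : Module.End ℂ W) = (- b) • (1 - starRingEnd ℂ a • G) := by
      rw [smul_sub, smul_smul, neg_mul, mul_comm b, hab h0]
      simp only [neg_smul, one_smul]; abel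
    rw [this, _root_.smul_pow, LinearMap.smul_apply, ← h3, smul_zero]

lemma exists_sigma {W : Type*} [AddCommGroup W] [Module ℂ W] [FiniteDimensional ℂ W]
    (G : Module.End ℂ W)
    (l : W →ₗ[ℂ] ℂ) (hl : ∀ w, l (G w) = l w)
    (T T' : W →ₛₗ[starRingEnd ℂ] W) (hTT' : ∀ w, T (T' w) = w) (hT'T : ∀ w, T' (T w) = w)
    (hT : ∀ w, l w = 0 → G (T (G w)) = T w)
    (hT' : ∀ w, l w = 0 → G (T' (G w)) = T' w) :
    ∃ σ : W →ₛₗ[starRingEnd ℂ] W, (∀ w, σ (σ w) = w) ∧ (∀ w, G (σ (G w)) = σ w) ∧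
      ∀ w, l (σ w) = starRingEnd ℂ (l w) := by
  let P : Set ℂ → Submodule ℂ W := fun S => ⨆ a ∈ S, G.maxGenEigenspace a
  let Sp : Set ℂ := {a | 1 < ‖a‖}
  let Sm : Set ℂ := {a | ‖a‖ < 1}
  let S0 : Set ℂ := {a | ‖a‖ = 1}
  have hdis : ∀ S S', Disjoint S S' → Disjoint (P S) (P S') := fun S S' h =>
    (Module.End.independent_maxGenEigenspace G).disjoint_biSup_biSup h
  have hunion : ∀ S S', P (S ∪ S') = P S ⊔ P S' := fun S S' => iSup_union
  have htop : P Set.univ = ⊤ := by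
    simp only [P, Set.mem_univ, iSup_pos]
    exact Module.End.iSup_maxGenEigenspace_eq_top G
  have hinv : ∀ S, ∀ w ∈ P S, G w ∈ P S := by
    intro S w hw
    have : P S ≤ (P S).comap G := by
      refine iSup₂_le fun a ha x hx => ?_
      exact Submodule.mem_iSup_of_mem a (Submodule.mem_iSup_of_mem ha
        (Module.End.mapsTo_maxGenEigenspace_of_comm (Commute.refl G) a hx))
    exact this hw
  have hmap : ∀ (T : W →ₛₗ[starRingEnd ℂ] W), (∀ w, l w = 0 → G (T (G w)) = T w) →
      ∀ S S' : Set ℂ, (1 ∉ S) → (∀ a ∈ S, ∃ b ∈ S', a ≠ 0 → starRingEnd ℂ a * b = 1) →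
      ∀ w ∈ P S, l w = 0 ∧ T w ∈ P S' := by
    intro T hT S S' h1 h2 w hw
    have : P S ≤ LinearMap.ker l ⊓ (P S').comap T := by
      refine iSup₂_le fun a ha x hx => ?_
      obtain ⟨b, hb, hab⟩ := h2 a ha
      have := gen_map G l hl T hT a b (fun h => h1 (h ▸ ha)) hab x hx
      exact ⟨this.1, Submodule.mem_iSup_of_mem b (Submodule.mem_iSup_of_mem hb this.2)⟩
    exact this hw
  have hpm : ∀ w ∈ P Sp, l w = 0 ∧ T w ∈ P Sm := by
    refine hmap T hT Sp Sm (by simp [Sp]) fun a ha => ?_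
    have ha : 1 < ‖a‖ := ha
    have : starRingEnd ℂ a ≠ 0 := by
      rw [← norm_ne_zero_iff, RCLike.norm_conj]; linarith
    refine ⟨(starRingEnd ℂ a)⁻¹, ?_, fun _ => mul_inv_cancel₀ this⟩
    change ‖_‖ < 1
    rw [norm_inv, RCLike.norm_conj]
    exact inv_lt_one_of_one_lt₀ ha
  have hmp : ∀ w ∈ P Sm, l w = 0 ∧ T' w ∈ P Sp := by
    refine hmap T' hT' Sm Sp (by simp [Sm]) fun a ha => ?_
    have ha : ‖a‖ < 1 := ha
    by_cases h0 : a = 0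
    · exact ⟨2, by simp [Sp], fun h => absurd h0 h⟩
    have : starRingEnd ℂ a ≠ 0 := by simpa using h0
    refine ⟨(starRingEnd ℂ a)⁻¹, ?_, fun _ => mul_inv_cancel₀ this⟩
    change 1 < ‖_‖
    rw [norm_inv, RCLike.norm_conj]
    exact (one_lt_inv₀ (norm_pos_iff.2 h0)).2 ha
  -- the circle part
  obtain ⟨σ₀, hs1, hs2, hs3⟩ := circ (G.restrict (hinv S0)) (by
    rintro a ⟨w, hw⟩ hne he
    by_contra hna
    apply hne
    have he' : G w = a • w := congrArg Subtype.val he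
    have hd := (Module.End.independent_maxGenEigenspace G).disjoint_biSup (x := a) (y := S0) hna
    have : w = 0 := by
      refine Submodule.disjoint_def.1 hd w ?_ hw
      rw [Module.End.mem_maxGenEigenspace]
      exact ⟨1, by simp [he']⟩
    exact Subtype.ext this)
    (l ∘ₗ (P S0).subtype) (fun w => hl w)
  have c1 : IsCompl (P (Sp ∪ Sm)) (P S0) := by
    constructor
    · apply hdis
      rw [Set.disjoint_left]
      rintro a (h | h) h' <;> simp only [Sp, Sm, S0, Set.mem_ofPred_eq] at h h' <;> linarith
    · rw [codisjoint_iff, ← hunion, ← htop]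
      congr 1
      ext a
      simp only [Sp, Sm, S0, Set.mem_union, Set.mem_ofPred_eq, Set.mem_univ, iff_true]
      rcases lt_trichotomy ‖a‖ 1 with h | h | h <;> simp [h]
  have c2 : IsCompl (P Sp) (P (Sm ∪ S0)) := by
    constructor
    · apply hdis
      rw [Set.disjoint_left]
      rintro a h (h' | h') <;> simp only [Sp, Sm, S0, Set.mem_ofPred_eq] at h h' <;> linarith
    · rw [codisjoint_iff, ← hunion, ← htop]
      congr 1
      ext a
      simp only [Sp, Sm, S0, Set.mem_union, Set.mem_ofPred_eq, Set.mem_univ, iff_true]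
      rcases lt_trichotomy ‖a‖ 1 with h | h | h <;> simp [h]
  have c3 : IsCompl (P Sm) (P (Sp ∪ S0)) := by
    constructor
    · apply hdis
      rw [Set.disjoint_left]
      rintro a h (h' | h') <;> simp only [Sp, Sm, S0, Set.mem_ofPred_eq] at h h' <;> linarith
    · rw [codisjoint_iff, ← hunion, ← htop]
      congr 1
      ext a
      simp only [Sp, Sm, S0, Set.mem_union, Set.mem_ofPred_eq, Set.mem_univ, iff_true]
      rcases lt_trichotomy ‖a‖ 1 with h | h | h <;> simp [h]
  have mono : ∀ S S', S ⊆ S' → P S ≤ P S' := fun S S' h => biSup_mono h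
  let πp : W →ₗ[ℂ] W := (P Sp).subtype ∘ₗ (P Sp).projectionOnto _ c2
  let πm : W →ₗ[ℂ] W := (P Sm).subtype ∘ₗ (P Sm).projectionOnto _ c3
  let π0 : W →ₗ[ℂ] P S0 := (P S0).projectionOnto _ c1.symm
  let σ : W →ₛₗ[starRingEnd ℂ] W :=
    T.comp πp + T'.comp πm + ((P S0).subtype.comp (σ₀.comp π0))
  have ep : ∀ w ∈ P Sp, σ w = T w := by
    intro w hw
    have e1 : πp w = w := congrArg Subtype.val (Submodule.projectionOnto_apply_left c2 ⟨w, hw⟩)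
    have e2 : πm w = 0 := congrArg Subtype.val
      (Submodule.projectionOnto_apply_of_mem_right c3 (mono _ _ Set.subset_union_left hw))
    have e3 : π0 w = 0 :=
      (Submodule.projectionOnto_apply_of_mem_right c1.symm (mono _ _ Set.subset_union_left hw))
    simp [σ, e1, e2, e3]
  have em : ∀ w ∈ P Sm, σ w = T' w := by
    intro w hw
    have e1 : πp w = 0 := congrArg Subtype.val
      (Submodule.projectionOnto_apply_of_mem_right c2 (mono _ _ Set.subset_union_left hw))
    have e2 : πm w = w := congrArg Subtype.val
      (Submodule.projectionOnto_apply_left c3 ⟨w, hw⟩)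
    have e3 : π0 w = 0 :=
      (Submodule.projectionOnto_apply_of_mem_right c1.symm (mono _ _ Set.subset_union_right hw))
    simp [σ, e1, e2, e3]
  have e0 : ∀ w : P S0, σ w = σ₀ w := by
    intro w
    have e1 : πp w = 0 := congrArg Subtype.val
      (Submodule.projectionOnto_apply_of_mem_right c2 (mono _ _ Set.subset_union_right w.2))
    have e2 : πm w = 0 := congrArg Subtype.val
      (Submodule.projectionOnto_apply_of_mem_right c3 (mono _ _ Set.subset_union_right w.2))
    have e3 : π0 w = w := Submodule.projectionOnto_apply_left c1.symm w
    simp [σ, e1, e2, e3]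
  have dec : ∀ w, ∃ x ∈ P Sp, ∃ y ∈ P Sm, ∃ z : P S0, w = x + y + z := by
    intro w
    have : w ∈ P (Sp ∪ Sm) ⊔ P S0 := by rw [c1.sup_eq_top]; trivial
    rw [hunion] at this
    obtain ⟨v, hv, z, hz, rfl⟩ := Submodule.mem_sup.1 this
    obtain ⟨x, hx, y, hy, rfl⟩ := Submodule.mem_sup.1 hv
    exact ⟨x, hx, y, hy, ⟨z, hz⟩, rfl⟩
  refine ⟨σ, ?_, ?_, ?_⟩
  · intro w
    obtain ⟨x, hx, y, hy, z, rfl⟩ := dec w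
    simp only [map_add]
    rw [ep x hx, em y hy, e0, em _ (hpm x hx).2, ep _ (hmp y hy).2, e0, hs1, hT'T, hTT']
  · intro w
    obtain ⟨x, hx, y, hy, z, rfl⟩ := dec w
    have hz : G (σ (G z)) = σ z := by
      have h1 : G z = ((G.restrict (hinv S0) z : P S0) : W) := rfl
      rw [h1, e0, e0, ← hs2 z]; rfl
    simp only [map_add]
    rw [hz, ep x hx, em y hy, ep _ (hinv _ x hx), em _ (hinv _ y hy), hT x (hpm x hx).1,
      hT' y (hmp y hy).1]
  · intro w
    obtain ⟨x, hx, y, hy, z, rfl⟩ := dec w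
    simp only [map_add]
    have h1 := (hpm x hx)
    have h2 := (hmp y hy)
    rw [ep x hx, em y hy, e0, h1.1, h2.1, (hmp _ h1.2).1, (hpm _ h2.2).1]
    simpa using hs3 z

end Helpers

lemma star_mulVec_conj {n : ℕ} (M : Matrix (Fin n) (Fin n) ℂ) (x : Fin n → ℂ) :
    star (M *ᵥ x) = M.map (starRingEnd ℂ) *ᵥ star x := by
  ext i
  simp [Matrix.mulVec, dotProduct]

namespace Aff

lemma coe_glConj {n : ℕ} (M : GL (Fin n) ℂ) :
    ((glConj M : GL (Fin n) ℂ) : Matrix (Fin n) (Fin n) ℂ)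
      = (M : Matrix (Fin n) (Fin n) ℂ).map (starRingEnd ℂ) := rfl

lemma bar_mul {n : ℕ} (g h : Aff n) : bar (g * h) = bar g * bar h := by
  ext1
  · exact map_mul glConj g.A h.A
  · simp [bar, star_mulVec_conj, coe_glConj]

lemma bar_bar {n : ℕ} (g : Aff n) : bar (bar g) = g := by
  ext1
  · ext i j
    simp [bar, coe_glConj]
  · simp [bar]

lemma bar_one {n : ℕ} : bar (1 : Aff n) = 1 := by
  ext1
  · exact map_one glConj
  · simp [bar]

end Aff

set_option maxHeartbeats 1000000 in
lemma strong_of_linear {n : ℕ} (g : Aff n) (S : GL (Fin n) ℂ)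
    (hS : S * g.A * S⁻¹ = (Aff.glConj g.A)⁻¹) :
    ∃ a : Aff n, a * Aff.bar a = 1 ∧ a * (Aff.bar g * (Aff.bar a * g)) = 1 := by
  set A : Matrix (Fin n) (Fin n) ℂ := g.A.val with hA
  have hS1 : Aff.glConj g.A * (S * g.A) = S := by
    have h := mul_inv_eq_iff_eq_mul.1 hS
    rw [h, mul_inv_cancel_left]
  have hS2 : g.A * (S⁻¹ * Aff.glConj g.A) = S⁻¹ := by
    have h : Aff.glConj g.A = S * g.A⁻¹ * S⁻¹ := by
      rw [← inv_inv (Aff.glConj g.A), ← hS]; group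
    rw [h]; group
  let G : Module.End ℂ ((Fin n → ℂ) × ℂ) :=
    { toFun := fun w => (A *ᵥ w.1 + w.2 • g.v, w.2)
      map_add' := fun x y => by
        ext1
        · simp only [Prod.fst_add, Prod.snd_add, mulVec_add, add_smul]; abel
        · rfl
      map_smul' := fun r x => by
        ext1
        · simp [mulVec_smul, mul_smul]
        · rfl }
  have hG : ∀ x t, G (x, t) = (A *ᵥ x + t • g.v, t) := fun x t => rfl
  let T : ((Fin n → ℂ) × ℂ) →ₛₗ[starRingEnd ℂ] ((Fin n → ℂ) × ℂ) :=
    { toFun := fun w => (star ((S : Matrix (Fin n) (Fin n) ℂ) *ᵥ w.1), starRingEnd ℂ w.2)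
      map_add' := fun x y => by ext1 <;> simp [mulVec_add]
      map_smul' := fun r x => by ext1 <;> simp [mulVec_smul] }
  have hT : ∀ x t, T (x, t) = (star ((S : Matrix (Fin n) (Fin n) ℂ) *ᵥ x), starRingEnd ℂ t) :=
    fun x t => rfl
  let T' : ((Fin n → ℂ) × ℂ) →ₛₗ[starRingEnd ℂ] ((Fin n → ℂ) × ℂ) :=
    { toFun := fun w =>
        (((S⁻¹ : GL (Fin n) ℂ) : Matrix (Fin n) (Fin n) ℂ) *ᵥ star w.1, starRingEnd ℂ w.2)
      map_add' := fun x y => by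
        ext1
        · simp only [Prod.fst_add, star_add, mulVec_add]
        · simp
      map_smul' := fun r x => by
        ext1
        · simp only [Prod.smul_fst, star_smul, mulVec_smul]; rfl
        · simp }
  have hT' : ∀ x t, T' (x, t) =
      (((S⁻¹ : GL (Fin n) ℂ) : Matrix (Fin n) (Fin n) ℂ) *ᵥ star x, starRingEnd ℂ t) :=
    fun x t => rfl
  obtain ⟨σ, h1, h2, h3⟩ := exists_sigma G (LinearMap.snd ℂ _ _) (fun w => rfl) T T'
    (by
      rintro ⟨x, t⟩
      rw [hT', hT, mulVec_mulVec, ← Units.val_mul, mul_inv_cancel]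
      simp)
    (by
      rintro ⟨x, t⟩
      rw [hT, hT', star_star, mulVec_mulVec, ← Units.val_mul, inv_mul_cancel]
      simp)
    (by
      rintro ⟨x, t⟩ (rfl : t = 0)
      simp only [hG, hT, zero_smul, add_zero, map_zero]
      ext1
      · apply star_injective
        simp only [star_mulVec_conj A, star_star]
        rw [hA, ← Aff.coe_glConj, mulVec_mulVec, mulVec_mulVec, ← Units.val_mul, ← Units.val_mul,
          mul_assoc, hS1]
      · rfl)
    (by
      rintro ⟨x, t⟩ (rfl : t = 0)
      simp only [hG, hT', zero_smul, add_zero, map_zero]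
      ext1
      · simp only [star_mulVec_conj A]
        rw [hA, ← Aff.coe_glConj, mulVec_mulVec, mulVec_mulVec, ← Units.val_mul, ← Units.val_mul,
          mul_assoc, hS2]
      · rfl)
  let s : Fin n → ℂ := (σ (0, 1)).1
  let M0 : (Fin n → ℂ) →ₗ[ℂ] (Fin n → ℂ) :=
    { toFun := fun x => (σ (star x, 0)).1
      map_add' := fun x y => by
        rw [← Prod.fst_add, ← map_add]; simp
      map_smul' := fun r x => by
        have : ((star (r • x), 0) : (Fin n → ℂ) × ℂ) = (starRingEnd ℂ r) • (star x, 0) := by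
          ext1 <;> simp
        rw [this, map_smulₛₗ]; simp }
  let M : Matrix (Fin n) (Fin n) ℂ := LinearMap.toMatrix' M0
  have hM : ∀ x, M *ᵥ star x = (σ (x, 0)).1 := by
    intro x
    rw [← Matrix.toLin'_apply, Matrix.toLin'_toMatrix']
    change (σ (star (star x), 0)).1 = _
    rw [star_star]
  have hσ : ∀ x t, σ (x, t) = (M *ᵥ star x + starRingEnd ℂ t • s, starRingEnd ℂ t) := by
    intro x t
    ext1
    · have : ((x, t) : (Fin n → ℂ) × ℂ) = (x, 0) + t • (0, 1) := by ext1 <;> simp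
      rw [this, map_add, map_smulₛₗ, hM]; rfl
    · exact h3 (x, t)
  clear_value M s
  have h4 : ∀ w, σ (G (σ (G w))) = w := fun w => by rw [h2, h1]
  have hMM : M * M.map (starRingEnd ℂ) = 1 := by
    apply Matrix.ext_of_mulVec_single
    intro i
    generalize (Pi.single i 1 : Fin n → ℂ) = x
    have := h1 (x, 0)
    rw [hσ, hσ] at this
    simpa [star_mulVec_conj, mulVec_mulVec] using congrArg Prod.fst this
  let Mu : GL (Fin n) ℂ := ⟨M, M.map (starRingEnd ℂ), hMM, mul_eq_one_comm.1 hMM⟩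
  refine ⟨⟨Mu, s⟩, ?_, ?_⟩
  · ext1
    · apply Units.ext
      exact hMM
    · have := h1 (0, 1)
      rw [hσ, hσ] at this
      change M *ᵥ star s + s = 0
      simpa using congrArg Prod.fst this
  · ext1
    · apply Units.ext
      change M * (A.map (starRingEnd ℂ) * (M.map (starRingEnd ℂ) * A)) = 1
      apply Matrix.ext_of_mulVec_single
      intro i
      generalize (Pi.single i 1 : Fin n → ℂ) = x
      have := h4 (x, 0)
      rw [hG, hσ, hG, hσ] at this
      have := congrArg Prod.fst this
      simp only [zero_smul, map_zero, add_zero] at this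
      rw [star_mulVec_conj A (M *ᵥ _), star_mulVec_conj M, star_star] at this
      rw [one_mulVec, ← mulVec_mulVec, ← mulVec_mulVec, ← mulVec_mulVec]
      exact this
    · have := h4 (0, 1)
      rw [hG, hσ, hG, hσ] at this
      have := congrArg Prod.fst this
      change M *ᵥ (A.map (starRingEnd ℂ) *ᵥ (M.map (starRingEnd ℂ) *ᵥ g.v + star s) + star g.v)
        + s = 0
      simpa [star_mulVec_conj] using this

/-- for `g ∈ Aff(n, ℂ)`, the following are equivalent:
(i) `g` is c-reversible; (ii) `g` is a product of two coninvolutions;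
(iii) the linear part `L(g)` is c-reversible in `GL(n, ℂ)`, i.e. similar to
`(L(g)‾)⁻¹`. -/
theorem cReversible_tfae {n : ℕ} (g : Aff n) :
    (Aff.IsCReversible g ↔
      ∃ a b : Aff n, Aff.IsConinvolution a ∧ Aff.IsConinvolution b ∧ g = a * b) ∧
    (Aff.IsCReversible g ↔
      ∃ S : GL (Fin n) ℂ, S * g.A * S⁻¹ = (Aff.glConj g.A)⁻¹) := by
  have h12 : (∃ a b : Aff n, Aff.IsConinvolution a ∧ Aff.IsConinvolution b ∧ g = a * b) →
      Aff.IsCReversible g := by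
    rintro ⟨a, b, ha, hb, rfl⟩
    refine ⟨b, ?_⟩
    have ha' : Aff.bar a = a⁻¹ := (inv_eq_of_mul_eq_one_right ha).symm
    have hb' : Aff.bar b = b⁻¹ := (inv_eq_of_mul_eq_one_right hb).symm
    rw [Aff.bar_mul, ha', hb']; group
  have h13 : Aff.IsCReversible g →
      ∃ S : GL (Fin n) ℂ, S * g.A * S⁻¹ = (Aff.glConj g.A)⁻¹ := by
    rintro ⟨h, hh⟩
    exact ⟨h.A, congrArg Aff.A hh⟩
  have h32 : (∃ S : GL (Fin n) ℂ, S * g.A * S⁻¹ = (Aff.glConj g.A)⁻¹) →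
      ∃ a b : Aff n, Aff.IsConinvolution a ∧ Aff.IsConinvolution b ∧ g = a * b := by
    rintro ⟨S, hS⟩
    obtain ⟨a, ha, hb⟩ := strong_of_linear g S hS
    refine ⟨a, a⁻¹ * g, ha, ?_, by group⟩
    have ha' : Aff.bar a = a⁻¹ := (inv_eq_of_mul_eq_one_right ha).symm
    have hb' := congrArg Aff.bar hb
    rw [Aff.bar_mul, Aff.bar_mul, Aff.bar_mul, Aff.bar_bar, Aff.bar_bar, Aff.bar_one, ha'] at hb'
    change a⁻¹ * g * Aff.bar (a⁻¹ * g) = 1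
    rw [Aff.bar_mul, ← ha', Aff.bar_bar, ha', mul_assoc]
    exact hb'
  exact ⟨⟨fun h => h32 (h13 h), h12⟩, ⟨h13, fun h => h12 (h32 h)⟩⟩
end
end
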